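/- Let M ≥ 2 be an integer and let Q be an M×M real orthogonal matrix (QᵀQ = I), with all matrices indexed cyclically by ZMod M. Then for every M×M real matrix F and every pivot (c,r) ∈ ZMod M × ZMod M, the reconstruction from the pivoted dGHM matrix recovers a wrap-shifted, rescaled copy of the input: Qᵀ · A*_{c,r}(F) · Q = (4/(M−1)²) · F^{[−c, −r]}. -/

import Mathlib

/-!
Cyclic shifts of the inner index cancel in a matrix product, since they only permute the summands.
Hence the column shift of `Q` by `r` and the row shift of `Qᵀ` by `c` can be moved onto `F`, and the
pivoted dGHM matrix is the unpivoted transform `Q * F^{[-c,-r]} * Qᵀ` up to the scalar. Conjugating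
by the orthogonal matrix `Q` undoes this transform.
-/

open Matrix

/-- The wrap-shift of an `M × M` matrix `F` (indexed cyclically by `ZMod M`)
by `(c, r)`: columns are shifted cyclically by `c` and rows by `r`, i.e.
`F^{[c,r]} (i, j) = F (i - r, j - c)`. -/
def wrapShift {M : ℕ} {α : Type*} (F : Matrix (ZMod M) (ZMod M) α) (c r : ZMod M) :
    Matrix (ZMod M) (ZMod M) α :=
  fun i j => F (i - r) (j - c)

/-- The pivoted dGHM matrix of `F` for pivot position `(c, r)`:
`A*_{c,r}(F) = (4 / (M-1)^2) • Q^{[r,0]} * F * (Qᵀ)^{[0,c]}`. -/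
noncomputable def dGHM {M : ℕ} [NeZero M] (Q : Matrix (ZMod M) (ZMod M) ℝ)
    (c r : ZMod M) (F : Matrix (ZMod M) (ZMod M) ℝ) : Matrix (ZMod M) (ZMod M) ℝ :=
  (4 / ((M : ℝ) - 1) ^ 2) • (wrapShift Q r 0 * F * wrapShift Qᵀ 0 c)

section

variable {M : ℕ} {α : Type*}

lemma wrapShift_zero_zero (F : Matrix (ZMod M) (ZMod M) α) : wrapShift F 0 0 = F := by
  ext i j
  simp only [wrapShift, sub_zero]

lemma wrapShift_wrapShift (F : Matrix (ZMod M) (ZMod M) α) (c r c' r' : ZMod M) :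
    wrapShift (wrapShift F c r) c' r' = wrapShift F (c + c') (r + r') := by
  ext i j
  simp only [wrapShift, sub_sub, add_comm]

lemma wrapShift_wrapShift_neg (F : Matrix (ZMod M) (ZMod M) α) (c r : ZMod M) :
    wrapShift (wrapShift F (-c) (-r)) c r = F := by
  rw [wrapShift_wrapShift, neg_add_cancel, neg_add_cancel, wrapShift_zero_zero]

variable [NeZero M]

lemma wrapShift_mul_wrapShift [NonUnitalNonAssocSemiring α] (A B : Matrix (ZMod M) (ZMod M) α)
    (c k r : ZMod M) : wrapShift A k r * wrapShift B c k = wrapShift (A * B) c r :=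
  submatrix_mul_equiv A B (· - r) (Equiv.subRight k) (· - c)

lemma wrapShift_mul_mul_wrapShift [NonUnitalNonAssocSemiring α]
    (A F B : Matrix (ZMod M) (ZMod M) α) (c r : ZMod M) :
    wrapShift A r 0 * F * wrapShift B 0 c = A * wrapShift F (-c) (-r) * B := by
  set G := wrapShift F (-c) (-r)
  calc wrapShift A r 0 * F * wrapShift B 0 c
      = wrapShift A r 0 * wrapShift G c r * wrapShift B 0 c := by rw [wrapShift_wrapShift_neg]
    _ = wrapShift (A * G * B) 0 0 := by rw [wrapShift_mul_wrapShift, wrapShift_mul_wrapShift]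
    _ = A * G * B := wrapShift_zero_zero _

lemma dGHM_eq_smul_mul_wrapShift_mul_transpose (Q F : Matrix (ZMod M) (ZMod M) ℝ)
    (c r : ZMod M) :
    dGHM Q c r F = (4 / ((M : ℝ) - 1) ^ 2) • (Q * wrapShift F (-c) (-r) * Qᵀ) := by
  rw [dGHM, wrapShift_mul_mul_wrapShift]

end

/-- If `Q` is orthogonal, reconstruction from the pivoted dGHM matrix recovers a
wrap-shifted, rescaled copy of the input. -/
theorem reconstruction_of_orthogonal {M : ℕ} [NeZero M] (hM : 2 ≤ M)
    (Q : Matrix (ZMod M) (ZMod M) ℝ) (hQ : Qᵀ * Q = 1)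
    (F : Matrix (ZMod M) (ZMod M) ℝ) (c r : ZMod M) :
    Qᵀ * dGHM Q c r F * Q = (4 / ((M : ℝ) - 1) ^ 2) • wrapShift F (-c) (-r) := by
  set G := wrapShift F (-c) (-r)
  have conj_cancel : Qᵀ * (Q * G * Qᵀ) * Q = G :=
    calc Qᵀ * (Q * G * Qᵀ) * Q = (Qᵀ * Q) * G * (Qᵀ * Q) := by simp only [Matrix.mul_assoc]
      _ = G := by rw [hQ, Matrix.one_mul, Matrix.mul_one]
  rw [dGHM_eq_smul_mul_wrapShift_mul_transpose, Matrix.mul_smul, Matrix.smul_mul, conj_cancel]
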